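/- Let (H,(V_h)_{h ∈ V(H)}) be a graph-decomposition of a graph G and let k ∈ ℕ. Suppose that for every node h ∈ V(H) there exists a vertex z_h of G with V_h ⊆ B_G(z_h, k). Then (H,(V'_h)_{h ∈ V(H)}) with V'_h := B_G(V_h, k) for every h ∈ V(H) is a graph-decomposition of G of radial width at most 2k. -/

import Mathlib

open SimpleGraph

namespace RadialPaper

variable {V W N : Type*}

/-- The ball of radius `r` around a set `U` of vertices of `G`. -/
def ballSet (G : SimpleGraph V) (U : Set V) (r : ℕ) : Set V :=
  {v | ∃ u ∈ U, G.edist u v ≤ (r : ℕ∞)}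

/-- `G` has radius at most `r`: some vertex has distance at most `r` from every vertex.
The empty graph has radius `0`; a nonempty disconnected graph has radius `∞`, hence
satisfies `radiusLE` for no `r`. -/
def radiusLE (G : SimpleGraph V) (r : ℕ) : Prop :=
  Nonempty V → ∃ v : V, ∀ w : V, G.edist v w ≤ (r : ℕ∞)

/-- `(Hg, B)` is a graph-decomposition of `G` modelled on `Hg`. -/
def IsGraphDecomp (G : SimpleGraph V) (Hg : SimpleGraph N) (B : N → Set V) : Prop :=
  (∀ v : V, ∃ h : N, v ∈ B h) ∧
  (∀ ⦃u v : V⦄, G.Adj u v → ∃ h : N, u ∈ B h ∧ v ∈ B h) ∧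
  (∀ v : V, (Hg.induce {h : N | v ∈ B h}).Connected)

/-- A subgraph `X` of `G` is `c`-quasi-geodesic. -/
def IsQuasiGeodesic (G : SimpleGraph V) (X : G.Subgraph) (c : ℕ) : Prop :=
  ∀ u v : X.verts, X.coe.edist u v ≤ (c : ℕ∞) * G.edist (u : V) (v : V)

/-- The subgraph `Y` of `G` is a `(≥ k)`-subdivision of the graph `X`. -/
def IsSubdivGE (k : ℕ) (X : SimpleGraph W) {G : SimpleGraph V} (Y : G.Subgraph) : Prop :=
  ∃ (f : W → V) (p : ∀ ⦃u v : W⦄, X.Adj u v → G.Walk (f u) (f v)),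
    Function.Injective f ∧
    (∀ ⦃u v : W⦄ (h : X.Adj u v), (p h).IsPath) ∧
    (∀ ⦃u v : W⦄ (h : X.Adj u v), k + 1 ≤ (p h).length) ∧
    (∀ ⦃u v : W⦄ (h : X.Adj u v), p h.symm = (p h).reverse) ∧
    (∀ ⦃u v : W⦄ (h : X.Adj u v) (w : W), f w ∈ (p h).support → w = u ∨ w = v) ∧
    (∀ ⦃u v u' v' : W⦄ (h : X.Adj u v) (h' : X.Adj u' v'), s(u, v) ≠ s(u', v') →
      ∀ x : V, x ∈ (p h).support → x ∈ (p h').support →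
        (x = f u ∨ x = f v) ∧ (x = f u' ∨ x = f v')) ∧
    Y.verts = Set.range f ∪ {x : V | ∃ (u v : W) (h : X.Adj u v), x ∈ (p h).support} ∧
    Y.edgeSet = {e : Sym2 V | ∃ (u v : W) (h : X.Adj u v), e ∈ (p h).edges}

/-- `G` contains a `(≥ k)`-subdivision of `X` as a `c`-quasi-geodesic subgraph. -/
def ContainsQuasiGeodesicSubdivGE (G : SimpleGraph V) (k : ℕ) (X : SimpleGraph W) (c : ℕ) :
    Prop :=
  ∃ Y : G.Subgraph, IsSubdivGE k X Y ∧ IsQuasiGeodesic G Y c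

/-- `X` is a minor of `Hg`. -/
def IsMinorOf (X : SimpleGraph W) (Hg : SimpleGraph N) : Prop :=
  ∃ B : W → Set N, (∀ w, (B w).Nonempty) ∧ (∀ w, (Hg.induce (B w)).Connected) ∧
    (∀ ⦃w w' : W⦄, w ≠ w' → Disjoint (B w) (B w')) ∧
    (∀ ⦃w w' : W⦄, X.Adj w w' → ∃ a ∈ B w, ∃ b ∈ B w', Hg.Adj a b)

/-- A class of (finite) graphs, given on the canonical vertex sets `Fin n`, is minor-closed. -/
def MinorClosed (ℋ : ∀ n : ℕ, SimpleGraph (Fin n) → Prop) : Prop :=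
  ∀ ⦃m n : ℕ⦄ (X : SimpleGraph (Fin m)) (Hg : SimpleGraph (Fin n)),
    ℋ n Hg → IsMinorOf X Hg → ℋ m X

/-- The triangle `K³`. -/
def triangleGraph : SimpleGraph (Fin 3) := ⊤

/-- The claw `K_{1,3}`, with centre `0`. -/
def clawGraph : SimpleGraph (Fin 4) := SimpleGraph.fromRel (fun a _ => a = 0)

/-- The wrench graph: two adjacent vertices `0, 1` of degree three, with leaves `2,3` and
`4,5` respectively. -/
def wrenchGraph : SimpleGraph (Fin 6) :=
  SimpleGraph.fromRel (fun a b =>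
    (a = 0 ∧ b = 1) ∨ (a = 0 ∧ b = 2) ∨ (a = 0 ∧ b = 3) ∨ (a = 1 ∧ b = 4) ∨ (a = 1 ∧ b = 5))

/-- The star `K_{1,m}`, with centre `none`. -/
def starGraph (m : ℕ) : SimpleGraph (Option (Fin m)) :=
  SimpleGraph.fromRel (fun a _ => a = none)

/-- `Hg` is a disjoint union of paths: every connected component is a path. -/
def IsUnionOfPaths (Hg : SimpleGraph N) : Prop :=
  ∀ cc : Hg.ConnectedComponent, ∃ m : ℕ,
    Nonempty (Hg.induce cc.supp ≃g SimpleGraph.pathGraph m)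

/-- `Hg` is a disjoint union of cycles: every connected component is a cycle. -/
def IsUnionOfCycles (Hg : SimpleGraph N) : Prop :=
  ∀ cc : Hg.ConnectedComponent, ∃ m : ℕ, 3 ≤ m ∧
    Nonempty (Hg.induce cc.supp ≃g SimpleGraph.cycleGraph m)

/-- `Hg` is a subdivided star, i.e. a `(≥ 0)`-subdivision of some star `K_{1,m}`. -/
def IsSubdividedStar (Hg : SimpleGraph N) : Prop :=
  ∃ m : ℕ, IsSubdivGE 0 (starGraph m) (⊤ : Hg.Subgraph)

/-- `Hg` is a disjoint union of subdivided stars. -/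
def IsUnionOfSubdividedStars (Hg : SimpleGraph N) : Prop :=
  ∀ cc : Hg.ConnectedComponent, IsSubdividedStar (Hg.induce cc.supp)

/-- A graph-decomposition is honest: bags of adjacent nodes intersect. -/
def Honest (Hg : SimpleGraph N) (B : N → Set V) : Prop :=
  ∀ ⦃h h' : N⦄, Hg.Adj h h' → (B h ∩ B h').Nonempty

/-- The outer-radial width of a decomposition of `G` is at most `r`. -/
def OuterRadialWidthLE (G : SimpleGraph V) (B : N → Set V) (r : ℕ) : Prop :=
  ∀ h : N, ∃ z : V, ∀ v ∈ B h, G.edist z v ≤ (r : ℕ∞)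

/-- The radial spread of a decomposition `(Hg, B)` of a graph with vertex set `V`
is at most `r`. -/
def RadialSpreadLE (Hg : SimpleGraph N) (B : N → Set V) (r : ℕ) : Prop :=
  ∀ v : V, radiusLE (Hg.induce {h : N | v ∈ B h}) r

/-- `φ` is an `(m, a, M, A, r)`-quasi-isometry from `Hg` to `G`. -/
def IsQuasiIsometry (Hg : SimpleGraph N) (G : SimpleGraph V) (m a M A r : ℕ)
    (φ : N → V) : Prop :=
  (∀ h h' : N, Hg.edist h h' ≤ (m : ℕ∞) * G.edist (φ h) (φ h') + (a : ℕ∞)) ∧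
  (∀ h h' : N, G.edist (φ h) (φ h') ≤ (M : ℕ∞) * Hg.edist h h' + (A : ℕ∞)) ∧
  (∀ v : V, ∃ h : N, G.edist v (φ h) ≤ (r : ℕ∞))

/-- `C` is a connected component of `G - S`: a maximal connected set of vertices
disjoint from `S`. -/
def IsCompOf (G : SimpleGraph V) (C S : Set V) : Prop :=
  C.Nonempty ∧ Disjoint C S ∧ (G.induce C).Connected ∧
  ∀ D : Set V, C ⊆ D → Disjoint D S → (G.induce D).Connected → D = C

/-- The subgraph `P` of `G` is an `M₀`–`M₁` path meeting `C`. -/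
def IsM01Path (G : SimpleGraph V) (M₀ M₁ C : Set V) (P : G.Subgraph) : Prop :=
  ∃ (x y : V) (q : G.Walk x y), q.IsPath ∧ q.toSubgraph = P ∧ x ∈ M₀ ∧ y ∈ M₁ ∧
    (∀ z ∈ q.support, z ≠ x → z ≠ y → z ∉ M₀ ∪ M₁) ∧ ∃ z ∈ q.support, z ∈ C

/-- The number of `M₀`–`M₁` paths meeting `C` that are contained in the subgraph `OS`. -/
noncomputable def Wcount (G : SimpleGraph V) (M₀ M₁ C : Set V) (OS : G.Subgraph) : ℕ :=
  Set.ncard {P : G.Subgraph | P ≤ OS ∧ IsM01Path G M₀ M₁ C P}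

/- Distances from `U` up to `r` are the same in `ballSet G U r` as in `G`, because a shortest walk
realising such a distance stays in the ball. Hence a centre `z` of a bag reaches every vertex of
the enlarged bag, inside it, through a vertex of the bag.
For the decomposition property, the enlarged bag at `h` contains `v` if and only if the bag at `h`
meets the ball around `v`. That ball is connected, and the nodes whose bags meet a connected set
of vertices form a connected set, since adjacent vertices share a bag. -/

section InducedSubgraph

variable {G : SimpleGraph V} {H : SimpleGraph N} {U : Set V} {u v : V}

theorem induce_iUnion_preconnected {ι : Type*} {K : SimpleGraph ι} {s : ι → Set N}
    (hK : K.Preconnected) (hs : ∀ i, (H.induce (s i)).Preconnected)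
    (hadj : ∀ ⦃i j⦄, K.Adj i j → (s i ∩ s j).Nonempty) :
    (H.induce (⋃ i, s i)).Preconnected := by
  have reachable_within (i : ι) (a b : s i) : (H.induce (⋃ i, s i)).Reachable
      ⟨a, Set.mem_iUnion_of_mem i a.2⟩ ⟨b, Set.mem_iUnion_of_mem i b.2⟩ :=
    (hs i a b).map (H.induceHomOfLE (Set.subset_iUnion s i)).toHom
  have reachable_along {i j : ι} (p : K.Walk i j) : ∀ (a : s i) (b : s j),
      (H.induce (⋃ i, s i)).Reachable
        ⟨a, Set.mem_iUnion_of_mem i a.2⟩ ⟨b, Set.mem_iUnion_of_mem j b.2⟩ := by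
    induction p with
    | nil => exact reachable_within _
    | cons hij _ ih =>
      intro a b
      obtain ⟨c, hci, hcj⟩ := hadj hij
      exact (reachable_within _ a ⟨c, hci⟩).trans (ih ⟨c, hcj⟩ b)
  rintro ⟨a, ha⟩ ⟨b, hb⟩
  obtain ⟨i, hai⟩ := Set.mem_iUnion.1 ha
  obtain ⟨j, hbj⟩ := Set.mem_iUnion.1 hb
  obtain ⟨p⟩ := hK i j
  exact reachable_along p ⟨a, hai⟩ ⟨b, hbj⟩

theorem induce_iUnion_connected {ι : Type*} {K : SimpleGraph ι} {s : ι → Set N}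
    (hK : K.Connected) (hs : ∀ i, (H.induce (s i)).Connected)
    (hadj : ∀ ⦃i j⦄, K.Adj i j → (s i ∩ s j).Nonempty) :
    (H.induce (⋃ i, s i)).Connected := by
  obtain ⟨i⟩ := hK.nonempty
  obtain ⟨a, ha⟩ := (hs i).nonempty
  have : Nonempty (⋃ i, s i : Set N) := ⟨a, Set.mem_iUnion_of_mem i ha⟩
  exact ⟨induce_iUnion_preconnected hK.preconnected (fun i ↦ (hs i).preconnected) hadj⟩

theorem walk_length_induce (p : G.Walk u v) (hp : ∀ x ∈ p.support, x ∈ U) :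
    (p.induce U hp).length = p.length :=
  (Walk.length_map _ _).symm.trans (congrArg Walk.length (p.map_induce hp))

end InducedSubgraph

section Ball

variable {G : SimpleGraph V} {U : Set V} {k r : ℕ} {u v : V}

theorem subset_ballSet : U ⊆ ballSet G U r :=
  fun u hu ↦ ⟨u, hu, by simp only [edist_self, zero_le]⟩

theorem mem_ballSet_iff_inter_nonempty :
    v ∈ ballSet G U r ↔ (U ∩ ballSet G {v} r).Nonempty := by
  simp only [ballSet, Set.mem_ofPred_eq, Set.mem_singleton_iff, exists_eq_left, Set.Nonempty,
    Set.mem_inter_iff, edist_comm]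

theorem mem_ballSet_of_mem_support (hu : u ∈ U) {p : G.Walk u v} (hp : p.length ≤ r) :
    ∀ x ∈ p.support, x ∈ ballSet G U r := by
  classical
  exact fun x hx ↦ ⟨u, hu, (p.takeUntil x hx).edist_le.trans
    (mod_cast (p.length_takeUntil_le_length hx).trans hp)⟩

theorem edist_induce_ballSet_le {a b : ballSet G U r} (ha : (a : V) ∈ U)
    (hab : G.edist (a : V) b ≤ r) :
    (G.induce (ballSet G U r)).edist a b ≤ G.edist (a : V) b := by
  obtain ⟨p, hp⟩ := exists_walk_of_edist_ne_top (ne_top_of_le_ne_top (ENat.natCast_ne_top r) hab)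
  have hpr : p.length ≤ r := by exact_mod_cast hp.trans_le hab
  rw [← hp, ← walk_length_induce p (mem_ballSet_of_mem_support ha hpr)]
  exact Walk.edist_le _

theorem induce_ballSet_singleton_connected (v : V) (r : ℕ) :
    (G.induce (ballSet G {v} r)).Connected := by
  refine (connected_iff_exists_forall_reachable _).2 ⟨⟨v, subset_ballSet rfl⟩, ?_⟩
  intro w
  obtain ⟨_, rfl, hvw⟩ := w.2
  exact reachable_of_edist_ne_top <| ne_top_of_le_ne_top (ENat.natCast_ne_top r) <|
    (edist_induce_ballSet_le rfl hvw).trans hvw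

theorem radiusLE_induce_ballSet (hkr : k ≤ r) (hU : ∃ z, ∀ u ∈ U, G.edist z u ≤ k) :
    radiusLE (G.induce (ballSet G U r)) (k + r) := by
  rintro ⟨_, u₀, hu₀, -⟩
  obtain ⟨z, hz⟩ := hU
  have edist_center_le : ∀ u ∈ U, G.edist u z ≤ k := fun u hu ↦ edist_comm.trans_le (hz u hu)
  have hkr' : (k : ℕ∞) ≤ r := mod_cast hkr
  let center : ballSet G U r := ⟨z, u₀, hu₀, (edist_center_le u₀ hu₀).trans hkr'⟩
  refine ⟨center, fun w ↦ ?_⟩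
  obtain ⟨u, hu, huw⟩ := w.2
  let u' : ballSet G U r := ⟨u, subset_ballSet hu⟩
  let ball := G.induce (ballSet G U r)
  calc ball.edist center w
      ≤ ball.edist center u' + ball.edist u' w := SimpleGraph.edist_triangle
    _ = ball.edist u' center + ball.edist u' w := by rw [edist_comm]
    _ ≤ G.edist u z + G.edist u w :=
        add_le_add (edist_induce_ballSet_le hu ((edist_center_le u hu).trans hkr'))
          (edist_induce_ballSet_le hu huw)
    _ ≤ k + r := add_le_add (edist_center_le u hu) huw
    _ = ((k + r : ℕ) : ℕ∞) := (Nat.cast_add k r).symm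

end Ball

namespace IsGraphDecomp

variable {G : SimpleGraph V} {H : SimpleGraph N} {B : N → Set V}

theorem induce_nodes_inter_nonempty_connected (hB : IsGraphDecomp G H B) {U : Set V}
    (hU : (G.induce U).Connected) : (H.induce {h | (B h ∩ U).Nonempty}).Connected := by
  obtain ⟨-, exists_bag_of_adj, connected_nodes⟩ := hB
  have nodes_eq : {h | (B h ∩ U).Nonempty} = ⋃ u : U, {h | (u : V) ∈ B h} := by
    ext h
    simp only [Set.Nonempty, Set.mem_inter_iff, Set.mem_ofPred_eq, Set.mem_iUnion, Subtype.exists,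
      exists_prop, and_comm]
  rw [nodes_eq]
  exact induce_iUnion_connected hU (fun u ↦ connected_nodes u) fun _ _ huv ↦ exists_bag_of_adj huv

theorem ballSet_bags (hB : IsGraphDecomp G H B) (r : ℕ) :
    IsGraphDecomp G H fun h ↦ ballSet G (B h) r := by
  refine ⟨fun v ↦ ?_, fun u v huv ↦ ?_, fun v ↦ ?_⟩
  · exact (hB.1 v).imp fun _ hv ↦ subset_ballSet hv
  · exact (hB.2.1 huv).imp fun _ ⟨hu, hv⟩ ↦ ⟨subset_ballSet hu, subset_ballSet hv⟩
  · have nodes_eq : {h | v ∈ ballSet G (B h) r} = {h | (B h ∩ ballSet G {v} r).Nonempty} :=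
      Set.ext fun _ ↦ mem_ballSet_iff_inter_nonempty
    rw [nodes_eq]
    exact hB.induce_nodes_inter_nonempty_connected (induce_ballSet_singleton_connected v r)

end IsGraphDecomp

theorem decomposition_of_balls_around_bags_width_general
    {V N : Type*} (G : SimpleGraph V) (Hg : SimpleGraph N)
    (B : N → Set V) (hdec : IsGraphDecomp G Hg B) {k r : ℕ} (hkr : k ≤ r)
    (hz : ∀ h : N, ∃ z : V, ∀ v ∈ B h, G.edist z v ≤ (k : ℕ∞)) :
    IsGraphDecomp G Hg (fun h => ballSet G (B h) r) ∧
      ∀ h, radiusLE (G.induce (ballSet G (B h) r)) (k + r) :=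
  ⟨hdec.ballSet_bags r, fun h ↦ radiusLE_induce_ballSet hkr (hz h)⟩

/-- Let `(Hg, B)` be a graph-decomposition of `G`, `k : ℕ`, and suppose
that every bag `B h` is contained in a ball `B_G(z_h, k)`. Then replacing every bag by
`B_G(B h, k)` yields a graph-decomposition of `G` of radial width at most `2k`. -/
theorem decomposition_of_balls_around_bags_width
    {V N : Type*} [Fintype V] [Fintype N] (G : SimpleGraph V) (Hg : SimpleGraph N)
    (B : N → Set V) (hdec : IsGraphDecomp G Hg B) (k : ℕ)
    (hz : ∀ h : N, ∃ z : V, ∀ v ∈ B h, G.edist z v ≤ (k : ℕ∞)) :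
    IsGraphDecomp G Hg (fun h => ballSet G (B h) k) ∧
      ∀ h, radiusLE (G.induce (ballSet G (B h) k)) (2 * k) := by
  simpa only [two_mul] using
    decomposition_of_balls_around_bags_width_general G Hg B hdec le_rfl hz

end RadialPaper
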